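/- Let p be an odd prime number. For any two sets X, Y ∈ 𝒳_p, the inclusion X ⊆ Y holds if and only if i(Y) divides i(X). -/

import Mathlib

open TopologicalSpace

/-- The arithmetic progression `a + bℕ₀ = {a + b*n : n ≥ 0}` inside the positive integers. -/
def golombBasic (a b : ℕ) : Set ℕ+ := {x : ℕ+ | ∃ n : ℕ, (x : ℕ) = a + b * n}

/-- The Golomb topology on the positive integers, generated by the arithmetic
progressions `a + bℕ₀` with coprime `a, b ∈ ℕ`. -/
instance golombTopology : TopologicalSpace ℕ+ :=
  generateFrom {S : Set ℕ+ | ∃ a b : ℕ, 0 < a ∧ 0 < b ∧ Nat.Coprime a b ∧ S = golombBasic a b}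

/-- The positive integers not divisible by `p` (the set `ℕ \ pℕ`). -/
abbrev Np (p : ℕ) : Type := {x : ℕ+ // ¬ p ∣ (x : ℕ)}

/-- The `p`-adic topology on `ℕ \ pℕ`, generated by the traces of the sets
`x + p^nℕ₀`, `x, n ∈ ℕ`. -/
def padicTop (p : ℕ) : TopologicalSpace (Np p) :=
  generateFrom {S : Set (Np p) | ∃ x n : ℕ, 0 < x ∧ 0 < n ∧
    S = {y : Np p | ∃ k : ℕ, ((y : ℕ+) : ℕ) = x + p ^ n * k}}

/-- Closure of a set of positive integers in the `p`-adic topology on `ℕ \ pℕ`,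
viewed again as a set of positive integers. -/
def padicClosure (p : ℕ) (A : Set ℕ+) : Set ℕ+ :=
  Subtype.val '' (@closure (Np p) (padicTop p) (Subtype.val ⁻¹' A))

/-- `a^ℕ = {a^k : k ∈ ℕ}`, the set of positive powers of `a`. -/
def powSet (a : ℕ) : Set ℕ+ := {y : ℕ+ | ∃ k : ℕ, 0 < k ∧ (y : ℕ) = a ^ k}

/-- The closure of `a^ℕ` in the `p`-adic topology on `ℕ \ pℕ`. -/
def clPow (p a : ℕ) : Set ℕ+ := padicClosure p (powSet a)

/-- The family `𝒳_p` of closures of the sets `a^ℕ` for `a ∈ ℕ \ pℕ`, `a ≠ 1`. -/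
def XX (p : ℕ) : Set (Set ℕ+) := {X | ∃ a : ℕ, 0 < a ∧ a ≠ 1 ∧ ¬ p ∣ a ∧ X = clPow p a}

/-- The projection `π_n(X)` of a set of positive integers to `ℤ/p^nℤ`. -/
def pin (p n : ℕ) (X : Set ℕ+) : Set (ZMod (p ^ n)) :=
  (fun y : ℕ+ => ((y : ℕ) : ZMod (p ^ n))) '' X

/-- `n(X)`: the least `n ∈ ℕ` with `X = ℕ ∩ π_n⁻¹(π_n(X))` and `|π_n(X)| ≥ max(p,3)`. -/
noncomputable def nX (p : ℕ) (X : Set ℕ+) : ℕ :=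
  sInf {n : ℕ | 0 < n ∧ X = {y : ℕ+ | ((y : ℕ) : ZMod (p ^ n)) ∈ pin p n X} ∧
    max p 3 ≤ (pin p n X).ncard}

/-- `i(X)`: the index of the subgroup `π_{n(X)}(X)` in the group of units of `ℤ/p^{n(X)}ℤ`. -/
noncomputable def iX (p : ℕ) (X : Set ℕ+) : ℕ :=
  Nat.card ((ZMod (p ^ nX p X))ˣ) / (pin p (nX p X) X).ncard


/-!
A number `x` prime to `p` lies in `X = cl(a^ℕ)` iff, for every `n`, its class lies in the subgroup
`π_n(X)` of `(ℤ/p^nℤ)ˣ` generated by `a`. Write `a^(p-1) = 1 + p^k c` with `k > 0` and `p ∤ c`. For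
`m ≥ k` the order of `a` modulo `p^m` is divisible by `p^(m-k)`, the order of the kernel of
`(ℤ/p^mℤ)ˣ → (ℤ/p^kℤ)ˣ`. Since `(ℤ/p^mℤ)ˣ` is cyclic for odd `p`, `π_m(X)` contains this kernel
and is therefore the full preimage of `π_k(X)`, which makes `X` a union of residue classes modulo
`p^k`. Conversely, as soon as `X` is a union of classes modulo some `p^n` with `n > 0`, the index of
`π_m(X)` is the same for all `m ≥ n`. Hence `i(X)` and `i(Y)` can be read off at a common level
`m`, and in a cyclic group inclusion of subgroups is divisibility of their indices.
-/

open Subgroup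

section Cyclic

variable {G : Type*} [CommGroup G] [IsCyclic G] [Finite G] {H K : Subgroup G}

lemma ker_powMonoidHom_card (K : Subgroup G) : (powMonoidHom (Nat.card K)).ker = K := by
  refine (eq_of_le_of_card_ge (fun x hx => ?_) ?_).symm
  · exact orderOf_dvd_iff_pow_eq_one.1 (orderOf_dvd_natCard K hx)
  · rw [IsCyclic.card_powMonoidHom_ker, Nat.gcd_eq_right K.card_subgroup_dvd_card]

lemma subgroup_le_iff_card_dvd_card : H ≤ K ↔ Nat.card H ∣ Nat.card K := by
  refine ⟨card_dvd_of_le, fun h x hx => ?_⟩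
  rw [← ker_powMonoidHom_card K, MonoidHom.mem_ker, powMonoidHom_apply,
    ← orderOf_dvd_iff_pow_eq_one]
  exact (orderOf_dvd_natCard H hx).trans h

lemma subgroup_le_iff_index_dvd_index : H ≤ K ↔ K.index ∣ H.index := by
  refine ⟨index_dvd_of_le, fun h => subgroup_le_iff_card_dvd_card.2 ?_⟩
  refine Nat.dvd_of_mul_dvd_mul_right (Nat.pos_of_ne_zero H.index_ne_zero_of_finite) ?_
  rw [H.card_mul_index, ← K.card_mul_index]
  exact mul_dvd_mul_left _ h

end Cyclic

lemma exists_pos_pow_eq_of_mem_zpowers {G : Type*} [Group G] {g x : G}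
    (hg : IsOfFinOrder g) (hx : x ∈ zpowers g) : ∃ k, 0 < k ∧ g ^ k = x := by
  obtain ⟨k, rfl⟩ := hg.mem_powers_iff_mem_zpowers.2 hx
  exact ⟨k + orderOf g, Nat.add_pos_right k hg.orderOf_pos,
    by rw [pow_add, pow_orderOf_eq_one, mul_one]⟩

section PadicClosure

open Filter Topology

variable {p : ℕ}

lemma nhds_padicTop (hp : 1 < p) (x : Np p) :
    @nhds _ (padicTop p) x = ⨅ n, 𝓟 {y : Np p | (y : ℕ) ≡ x [MOD p ^ n]} := by
  rw [padicTop, nhds_generateFrom]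
  refine le_antisymm (le_iInf fun n => ?_) (le_iInf₂ ?_)
  · refine (iInf₂_le {y : Np p | ∃ k : ℕ, (y : ℕ) = x + p ^ (n + 1) * k}
      ⟨⟨0, by simp⟩, x, n + 1, x.1.pos, n.succ_pos, rfl⟩).trans (principal_mono.2 ?_)
    rintro y ⟨k, hk⟩
    have h : (y : ℕ) ≡ x [MOD p ^ (n + 1)] := by simp [Nat.ModEq, hk]
    exact h.of_dvd (pow_dvd_pow p n.le_succ)
  · rintro _ ⟨hx, x₀, n, -, -, rfl⟩
    obtain ⟨k, hk⟩ := hx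
    -- Modulo `p ^ (n + x) > x`, no positive integer below `x` is congruent to `x`.
    refine iInf_le_of_le (n + x) (principal_mono.2 fun y hy => ?_)
    have hxy : (x : ℕ) ≤ y := by
      by_contra! hlt
      have hpow : (x : ℕ) < p ^ (n + x) :=
        (Nat.lt_pow_self hp).trans_le (Nat.pow_le_pow_right hp.le (by omega))
      exact hlt.ne (hy.eq_of_lt_of_lt (hlt.trans hpow) hpow)
    obtain ⟨j, hj⟩ := (Nat.modEq_iff_dvd' hxy).1 (hy.symm.of_dvd (pow_dvd_pow p le_self_add))
    exact ⟨k + j, by rw [mul_add]; omega⟩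

lemma mem_closure_padicTop_iff (hp : 1 < p) {A : Set (Np p)} {x : Np p} :
    x ∈ closure[padicTop p] A ↔ ∀ n, ∃ y ∈ A, (y : ℕ) ≡ x [MOD p ^ n] := by
  have hanti : Antitone fun n => {y : Np p | (y : ℕ) ≡ x [MOD p ^ n]} :=
    fun _ _ hnm _ hy => Nat.ModEq.of_dvd (pow_dvd_pow p hnm) hy
  have hbasis := hasBasis_iInf_principal hanti.directed_ge
  rw [← nhds_padicTop hp] at hbasis
  rw [@mem_closure_iff_nhds_basis _ (padicTop p) _ _ _ _ _ hbasis]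
  simp only [true_imp_iff, Set.mem_ofPred_eq]

lemma not_dvd_of_mem_clPow {b : ℕ} {x : ℕ+} (hx : x ∈ clPow p b) : ¬ p ∣ (x : ℕ) := by
  obtain ⟨y, -, rfl⟩ := hx
  exact y.2

lemma not_dvd_of_mem_pin_clPow {b n y : ℕ} (hn : n ≠ 0)
    (hy : (y : ZMod (p ^ n)) ∈ pin p n (clPow p b)) : ¬ p ∣ y := by
  obtain ⟨x, hx, hxy⟩ := hy
  have hmod : (x : ℕ) ≡ y [MOD p] :=
    ((ZMod.natCast_eq_natCast_iff _ _ _).1 hxy).of_dvd (dvd_pow_self p hn)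
  exact fun hpy => not_dvd_of_mem_clPow hx ((hmod.dvd_iff dvd_rfl).2 hpy)

end PadicClosure

section Saturated

/-- `X` is the trace on the positive integers of a union of residue classes modulo `p ^ n`;
this is the first of the two conditions that define `n(X)`. -/
def IsSaturated (p n : ℕ) (X : Set ℕ+) : Prop :=
  X = {y : ℕ+ | ((y : ℕ) : ZMod (p ^ n)) ∈ pin p n X}

variable {p m n : ℕ} {X Y : Set ℕ+}

lemma isSaturated_iff :
    IsSaturated p n X ↔ ∀ y : ℕ+, ((y : ℕ) : ZMod (p ^ n)) ∈ pin p n X → y ∈ X :=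
  ⟨fun h _ hy => h.ge hy, fun h => Set.Subset.antisymm (fun x hx => ⟨x, hx, rfl⟩) h⟩

lemma IsSaturated.mono (hX : IsSaturated p n X) (hnm : n ≤ m) : IsSaturated p m X := by
  rw [isSaturated_iff] at hX ⊢
  rintro y ⟨x, hx, hxy⟩
  refine hX y ⟨x, hx, ?_⟩
  rw [ZMod.natCast_eq_natCast_iff] at hxy ⊢
  exact hxy.of_dvd (pow_dvd_pow p hnm)

lemma IsSaturated.subset_iff_pin_subset (hY : IsSaturated p n Y) :
    X ⊆ Y ↔ pin p n X ⊆ pin p n Y :=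
  ⟨Set.image_mono, fun h x hx => isSaturated_iff.1 hY x (h ⟨x, hx, rfl⟩)⟩

lemma nX_spec (hn : 0 < n) (hsat : IsSaturated p n X) (hcard : max p 3 ≤ (pin p n X).ncard) :
    0 < nX p X ∧ IsSaturated p (nX p X) X := by
  have hmem : nX p X ∈ {n | 0 < n ∧ IsSaturated p n X ∧ max p 3 ≤ (pin p n X).ncard} :=
    Nat.sInf_mem ⟨n, hn, hsat, hcard⟩
  exact ⟨hmem.1, hmem.2.1⟩

end Saturated

section Residues

variable {p : ℕ} [hp : Fact p.Prime] {m n : ℕ}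

/-- The class of `x ∈ ℕ \ pℕ` in the group of units of `ℤ/p^nℤ`. -/
def residueUnit (n : ℕ) (x : Np p) : (ZMod (p ^ n))ˣ :=
  ZMod.unitOfCoprime x (((hp.out.coprime_iff_not_dvd).2 x.2).symm.pow_right n)

lemma val_residueUnit (n : ℕ) (x : Np p) : (residueUnit n x : ZMod (p ^ n)) = (x : ℕ) := rfl

lemma residueUnit_eq_residueUnit_iff {x y : Np p} :
    residueUnit n x = residueUnit n y ↔ (x : ℕ) ≡ y [MOD p ^ n] := by
  rw [← Units.val_inj, val_residueUnit, val_residueUnit, ZMod.natCast_eq_natCast_iff]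

instance : Pow (Np p) ℕ where
  pow x k := ⟨x ^ k, fun h => x.2 (hp.out.dvd_of_dvd_pow (PNat.pow_coe _ k ▸ h))⟩

lemma coe_npow (x : Np p) (k : ℕ) : ((x ^ k : Np p) : ℕ) = (x : ℕ) ^ k :=
  PNat.pow_coe _ k

lemma residueUnit_pow (n : ℕ) (x : Np p) (k : ℕ) :
    residueUnit n (x ^ k) = residueUnit n x ^ k := by
  ext
  rw [val_residueUnit, coe_npow, Nat.cast_pow, Units.val_pow_eq_pow_val, val_residueUnit]

lemma unitsMap_residueUnit (hnm : n ≤ m) (x : Np p) :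
    ZMod.unitsMap (pow_dvd_pow p hnm) (residueUnit m x) = residueUnit n x := by
  ext
  rw [ZMod.unitsMap_val, val_residueUnit, val_residueUnit, ZMod.cast_natCast (pow_dvd_pow p hnm)]

lemma residueUnit_surjective (hn : n ≠ 0) :
    Function.Surjective (residueUnit n : Np p → (ZMod (p ^ n))ˣ) := by
  intro w
  have hpw : ¬ p ∣ (w : ZMod (p ^ n)).val :=
    (hp.out.coprime_iff_not_dvd).1
      ((ZMod.val_coe_unit_coprime w).coprime_dvd_right (dvd_pow_self p hn)).symm
  have hpos : 0 < (w : ZMod (p ^ n)).val :=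
    Nat.pos_of_ne_zero fun h => hpw (h ▸ dvd_zero p)
  exact ⟨⟨⟨_, hpos⟩, hpw⟩, Units.ext (ZMod.natCast_zmod_val _)⟩

/-- The subgroup of the units of `ℤ/p^nℤ` generated by the class of `a`: the group `π_n(X)` for
`X = cl(a^ℕ)`, see `pin_clPow`. -/
def residueSubgroup (n : ℕ) (a : Np p) : Subgroup (ZMod (p ^ n))ˣ :=
  zpowers (residueUnit n a)

lemma map_residueSubgroup (hnm : n ≤ m) (a : Np p) :
    (residueSubgroup m a).map (ZMod.unitsMap (pow_dvd_pow p hnm)) = residueSubgroup n a := by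
  rw [residueSubgroup, MonoidHom.map_zpowers, unitsMap_residueUnit hnm, residueSubgroup]

end Residues

section Closure

variable {p : ℕ} [hp : Fact p.Prime] {m n : ℕ} {a : Np p}

lemma coe_mem_clPow_iff {x : Np p} :
    (x : ℕ+) ∈ clPow p (a : ℕ+) ↔ ∀ n, residueUnit n x ∈ residueSubgroup n a := by
  rw [clPow, padicClosure, Subtype.val_injective.mem_set_image,
    mem_closure_padicTop_iff hp.out.one_lt]
  refine forall_congr' fun n => ⟨?_, fun hx => ?_⟩
  · rintro ⟨y, ⟨k, -, hyk⟩, hyx⟩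
    obtain rfl : y = a ^ k := Subtype.ext (PNat.eq (hyk.trans (coe_npow a k).symm))
    rw [← residueUnit_eq_residueUnit_iff.2 hyx, residueUnit_pow]
    exact npow_mem_zpowers _ k
  · obtain ⟨k, hk, hkx⟩ := exists_pos_pow_eq_of_mem_zpowers (isOfFinOrder_of_finite _) hx
    exact ⟨a ^ k, ⟨k, hk, coe_npow a k⟩,
      residueUnit_eq_residueUnit_iff.1 ((residueUnit_pow n a k).trans hkx)⟩

lemma pow_mem_clPow (a : Np p) (k : ℕ) : ((a ^ k : Np p) : ℕ+) ∈ clPow p (a : ℕ+) :=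
  coe_mem_clPow_iff.2 fun n => residueUnit_pow n a k ▸ npow_mem_zpowers _ k

lemma pin_clPow (n : ℕ) (a : Np p) :
    pin p n (clPow p (a : ℕ+)) = Units.val '' (residueSubgroup n a : Set (ZMod (p ^ n))ˣ) := by
  ext z
  constructor
  · rintro ⟨x, hx, rfl⟩
    lift x to Np p using not_dvd_of_mem_clPow hx
    exact ⟨residueUnit n x, coe_mem_clPow_iff.1 hx n, rfl⟩
  · rintro ⟨w, hw, rfl⟩
    obtain ⟨k, rfl⟩ := mem_powers_iff_mem_zpowers.2 hw
    exact ⟨a ^ k, pow_mem_clPow a k, congrArg Units.val (residueUnit_pow n a k)⟩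

lemma coe_mem_pin_clPow_iff {x : Np p} :
    ((x : ℕ) : ZMod (p ^ n)) ∈ pin p n (clPow p (a : ℕ+)) ↔
      residueUnit n x ∈ residueSubgroup n a := by
  rw [pin_clPow, ← val_residueUnit, Units.val_injective.mem_set_image, SetLike.mem_coe]

lemma ncard_pin_clPow (n : ℕ) (a : Np p) :
    (pin p n (clPow p (a : ℕ+))).ncard = Nat.card (residueSubgroup n a) := by
  rw [pin_clPow, Set.ncard_image_of_injective _ Units.val_injective]
  rfl

lemma IsSaturated.clPow_subset_clPow_iff {b : Np p} (hb : IsSaturated p n (clPow p (b : ℕ+))) :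
    clPow p (a : ℕ+) ⊆ clPow p (b : ℕ+) ↔ residueSubgroup n a ≤ residueSubgroup n b := by
  rw [hb.subset_iff_pin_subset, pin_clPow, pin_clPow,
    Set.image_subset_image_iff Units.val_injective, SetLike.coe_subset_coe]

lemma isSaturated_clPow_iff (hn : n ≠ 0) :
    IsSaturated p n (clPow p (a : ℕ+)) ↔ ∀ m, ∀ hnm : n ≤ m,
      (residueSubgroup n a).comap (ZMod.unitsMap (pow_dvd_pow p hnm)) = residueSubgroup m a := by
  rw [isSaturated_iff]
  constructor
  · intro hsat m hnm
    refine le_antisymm (fun w hw => ?_) (map_le_iff_le_comap.1 (map_residueSubgroup hnm a).le)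
    obtain ⟨x, rfl⟩ := residueUnit_surjective (by omega) w
    rw [mem_comap, unitsMap_residueUnit hnm] at hw
    exact coe_mem_clPow_iff.1 (hsat x (coe_mem_pin_clPow_iff.2 hw)) m
  · intro hcomap y hy
    lift y to Np p using not_dvd_of_mem_pin_clPow hn hy
    refine coe_mem_clPow_iff.2 fun m => ?_
    rw [coe_mem_pin_clPow_iff, ← unitsMap_residueUnit (le_max_left n m), ← mem_comap,
      hcomap _ (le_max_left n m)] at hy
    rw [← unitsMap_residueUnit (le_max_right n m), ← map_residueSubgroup (le_max_right n m)]
    exact mem_map_of_mem _ hy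

lemma IsSaturated.index_residueSubgroup_eq (hn : n ≠ 0) (ha : IsSaturated p n (clPow p (a : ℕ+)))
    (hnm : n ≤ m) : (residueSubgroup m a).index = (residueSubgroup n a).index := by
  rw [← (isSaturated_clPow_iff hn).1 ha m hnm,
    index_comap_of_surjective _ (ZMod.unitsMap_surjective _)]

end Closure

section Existence

lemma card_ker_unitsMap_mul_totient {M N : ℕ} [NeZero M] (h : N ∣ M) :
    Nat.card (ZMod.unitsMap h).ker * N.totient = M.totient := by
  have : NeZero N := ⟨ne_zero_of_dvd_ne_zero (NeZero.ne M) h⟩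
  rw [← ZMod.card_units_eq_totient, ← ZMod.card_units_eq_totient, ← Nat.card_eq_fintype_card,
    ← Nat.card_eq_fintype_card, ← (ZMod.unitsMap h).ker.card_mul_index, index_ker,
    (ZMod.unitsMap h).range_eq_top.2 (ZMod.unitsMap_surjective h), card_top]

variable {p : ℕ} [hp : Fact p.Prime] {m n : ℕ} {a : Np p}

lemma card_ker_unitsMap_prime_pow (hn : n ≠ 0) (hnm : n ≤ m) :
    Nat.card (ZMod.unitsMap (pow_dvd_pow p hnm)).ker = p ^ (m - n) := by
  refine Nat.eq_of_mul_eq_mul_right (Nat.totient_pos.2 (pow_pos hp.out.pos n)) ?_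
  rw [card_ker_unitsMap_mul_totient, Nat.totient_prime_pow hp.out (by omega),
    Nat.totient_prime_pow hp.out (by omega), ← mul_assoc, ← pow_add]
  congr 2
  omega

lemma isSaturated_clPow_of_dvd_card (hodd : p ≠ 2) (hn : n ≠ 0)
    (hcard : ∀ m, n ≤ m → p ^ (m - n) ∣ Nat.card (residueSubgroup m a)) :
    IsSaturated p n (clPow p (a : ℕ+)) := by
  refine (isSaturated_clPow_iff hn).2 fun m hnm => ?_
  have := ZMod.isCyclic_units_of_prime_pow p hp.out hodd m
  rw [← map_residueSubgroup hnm a]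
  refine comap_map_eq_self (subgroup_le_iff_card_dvd_card.2 ?_)
  rw [card_ker_unitsMap_prime_pow hn hnm]
  exact hcard m hnm

lemma exists_pow_sub_one_eq_one_add_mul {p a : ℕ} (hp : p.Prime) (hpa : ¬ p ∣ a) (ha : 1 < a) :
    ∃ k c, k ≠ 0 ∧ ¬ p ∣ c ∧ a ^ (p - 1) = 1 + p ^ k * c := by
  have hlt : 1 < a ^ (p - 1) := Nat.one_lt_pow (Nat.sub_ne_zero_of_lt hp.one_lt) ha
  have hfermat : p ∣ a ^ (p - 1) - 1 := by
    rw [← Nat.modEq_iff_dvd' hlt.le, ← Nat.totient_prime hp]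
    exact (Nat.ModEq.pow_totient (hp.coprime_iff_not_dvd.2 hpa).symm).symm
  obtain ⟨k, c, hpc, hkc⟩ :=
    Nat.exists_eq_pow_mul_and_not_dvd (Nat.sub_ne_zero_of_lt hlt) p hp.ne_one
  refine ⟨k, c, ?_, hpc, by omega⟩
  rintro rfl
  rw [pow_zero, one_mul] at hkc
  exact hpc (hkc ▸ hfermat)

lemma exists_pow_dvd_card_residueSubgroup (hodd : p ≠ 2) (ha : (a : ℕ) ≠ 1) :
    ∃ k, k ≠ 0 ∧ ∀ m, k ≤ m → p ^ (m - k) ∣ Nat.card (residueSubgroup m a) := by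
  have hp2 : 2 < p := lt_of_le_of_ne hp.out.two_le hodd.symm
  obtain ⟨k, c, hk, hpc, hac⟩ :=
    exists_pow_sub_one_eq_one_add_mul hp.out a.2 (lt_of_le_of_ne a.1.pos ha.symm)
  refine ⟨k, hk, fun m hkm => ?_⟩
  obtain ⟨j, rfl⟩ := Nat.exists_eq_add_of_le' hkm
  have hpow : ((residueUnit (j + k) a ^ (p - 1) : (ZMod (p ^ (j + k)))ˣ) : ZMod (p ^ (j + k))) =
      1 + p ^ k * (c : ℤ) := by
    rw [Units.val_pow_eq_pow_val, val_residueUnit]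
    exact_mod_cast congrArg (Nat.cast : ℕ → ZMod (p ^ (j + k))) hac
  have horder : orderOf (residueUnit (j + k) a ^ (p - 1)) = p ^ j := by
    rw [← orderOf_units, hpow]
    exact ZMod.orderOf_one_add_mul_prime_pow hp.out k hk
      (by nlinarith [Nat.pos_of_ne_zero hk]) c (by exact_mod_cast hpc) j
  rw [residueSubgroup, Nat.card_zpowers, Nat.add_sub_cancel, ← horder]
  exact orderOf_pow_dvd _

lemma nX_clPow_spec (hodd : p ≠ 2) (ha : (a : ℕ) ≠ 1) :
    0 < nX p (clPow p (a : ℕ+)) ∧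
      IsSaturated p (nX p (clPow p (a : ℕ+))) (clPow p (a : ℕ+)) := by
  obtain ⟨k, hk, hdvd⟩ := exists_pow_dvd_card_residueSubgroup hodd ha
  refine nX_spec k.succ_pos
    ((isSaturated_clPow_of_dvd_card hodd hk hdvd).mono k.le_succ) ?_
  rw [ncard_pin_clPow, max_eq_left (lt_of_le_of_ne hp.out.two_le hodd.symm)]
  exact Nat.le_of_dvd Nat.card_pos (by simpa using hdvd (k + 1) k.le_succ)

lemma iX_clPow_eq_index (hodd : p ≠ 2) (ha : (a : ℕ) ≠ 1)
    (hm : nX p (clPow p (a : ℕ+)) ≤ m) :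
    iX p (clPow p (a : ℕ+)) = (residueSubgroup m a).index := by
  obtain ⟨hpos, hsat⟩ := nX_clPow_spec hodd ha
  rw [hsat.index_residueSubgroup_eq hpos.ne' hm, iX, ncard_pin_clPow,
    ← (residueSubgroup _ a).card_mul_index, Nat.mul_div_cancel_left _ Nat.card_pos]

end Existence

lemma exists_eq_clPow_of_mem_XX {p : ℕ} {X : Set ℕ+} (hX : X ∈ XX p) :
    ∃ a : Np p, (a : ℕ) ≠ 1 ∧ X = clPow p (a : ℕ+) := by
  obtain ⟨a, ha, ha1, hpa, rfl⟩ := hX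
  exact ⟨⟨⟨a, ha⟩, hpa⟩, ha1, rfl⟩

/-- For an odd prime `p` and `X, Y ∈ 𝒳_p`, `X ⊆ Y` holds iff `i(Y)` divides `i(X)`. -/
theorem XX_subset_iff_index_dvd (p : ℕ) (hp : p.Prime) (hodd : p ≠ 2)
    (X Y : Set ℕ+) (hX : X ∈ XX p) (hY : Y ∈ XX p) :
    X ⊆ Y ↔ iX p Y ∣ iX p X := by
  obtain ⟨a, ha, rfl⟩ := exists_eq_clPow_of_mem_XX hX
  obtain ⟨b, hb, rfl⟩ := exists_eq_clPow_of_mem_XX hY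
  have : Fact p.Prime := ⟨hp⟩
  obtain ⟨m, ham, hbm⟩ := exists_ge_ge (nX p (clPow p (a : ℕ+))) (nX p (clPow p (b : ℕ+)))
  have := ZMod.isCyclic_units_of_prime_pow p hp hodd m
  have hsat := (nX_clPow_spec hodd hb).2.mono hbm
  rw [iX_clPow_eq_index hodd ha ham, iX_clPow_eq_index hodd hb hbm,
    hsat.clPow_subset_clPow_iff, subgroup_le_iff_index_dvd_index]
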